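/- Let d ≥ 1, D := {1,...,d}, let B ⊆ D be nonempty, and let Q be a Young function such that L_Q(I^d) is not contained in L log^{|B|} L(I^d) (i.e. there exists g with ‖g‖_{L_Q} < ∞ but ∫_{I^d} |g| log^{|B|}(1+|g|) = ∞). Then sup_{n≥2} ‖L_{n(B)}∘R_{n(B')}‖_{L_Q(I^d) → L^1(I^d)} = ∞, where n(B) denotes the index vector all of whose coordinates equal n, and the operator norm is sup{ ‖(L_{n(B)}∘R_{n(B')})(f)‖_{L^1} : ‖f‖_{L_Q} ≤ 1 }. -/

import Mathlib

open MeasureTheory Filter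

noncomputable section

/-- The unit cube `[0,1)^d`. -/
def unitCube (d : ℕ) : Set (Fin d → ℝ) := Set.univ.pi fun _ => Set.Ico (0:ℝ) 1

/-- Lebesgue measure restricted to the unit cube `[0,1)^d`. -/
def cubeMeasure (d : ℕ) : Measure (Fin d → ℝ) := volume.restrict (unitCube d)

/-- The `1`-periodic function equal to `1` on `[0,1/2)` and to `-1` on `[1/2,1)`. -/
def r0 (x : ℝ) : ℝ := if Int.fract x < 1/2 then 1 else -1

/-- The Rademacher functions. -/
def rademacher (n : ℕ) (x : ℝ) : ℝ := r0 (2 ^ n * x)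

/-- The Walsh functions (in Paley enumeration, via binary digits). -/
def walsh (n : ℕ) (x : ℝ) : ℝ :=
  ∏ k ∈ Finset.range (n + 1), if n.testBit k then rademacher k x else 1

/-- The Walsh–Dirichlet kernel `D_n`. -/
def dirichletKernel (n : ℕ) (x : ℝ) : ℝ := ∑ k ∈ Finset.range n, walsh k x

/-- `l_n = ∑_{k=1}^{n-1} 1/k`. -/
def logSum (n : ℕ) : ℝ := ∑ k ∈ Finset.Icc 1 (n - 1), (1 : ℝ) / k

/-- The Nörlund logarithmic kernel `F_n`. -/
def FKernel (n : ℕ) (u : ℝ) : ℝ :=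
  (1 / logSum n) * ∑ i ∈ Finset.Ico 1 n, dirichletKernel (n - i) u / i

/-- The Riesz logarithmic kernel `G_n`. -/
def GKernel (n : ℕ) (u : ℝ) : ℝ :=
  (1 / logSum n) * ∑ i ∈ Finset.Ico 1 n, dirichletKernel i u / i

/-- Walsh–Fourier coefficient of `f` on the unit cube. -/
def walshCoef {d : ℕ} (f : (Fin d → ℝ) → ℝ) (j : Fin d → ℕ) : ℝ :=
  ∫ x, f x * ∏ i, walsh (j i) (x i) ∂(cubeMeasure d)

/-- Rectangular partial sums of the multiple Walsh–Fourier series. -/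
def rectPartialSum {d : ℕ} (f : (Fin d → ℝ) → ℝ) (N : Fin d → ℕ) (x : Fin d → ℝ) : ℝ :=
  ∑ j ∈ Fintype.piFinset (fun i => Finset.range (N i)),
    walshCoef f j * ∏ i, walsh (j i) (x i)

/-- The mixed logarithmic means `(L_{n_B} ∘ R_{n_{B'}})(f)`. -/
def mixedLogMean {d : ℕ} (B : Finset (Fin d)) (f : (Fin d → ℝ) → ℝ)
    (n : Fin d → ℕ) (x : Fin d → ℝ) : ℝ :=
  (∏ j, logSum (n j))⁻¹ *
    ∑ i ∈ Fintype.piFinset (fun j => Finset.Ico 1 (n j)),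
      rectPartialSum f (fun j => if j ∈ B then n j - i j else i j) x / ∏ j, (i j : ℝ)

/-- A Young function: convex, continuous, even, vanishing at `0`, with
`Q(u)/u → ∞` at `+∞` and `Q(u)/u → 0` at `0`. -/
structure YoungFunction where
  toFun : ℝ → ℝ
  nonneg : ∀ u, 0 ≤ toFun u
  convexOn : ConvexOn ℝ Set.univ toFun
  continuous : Continuous toFun
  even : ∀ u, toFun (-u) = toFun u
  map_zero : toFun 0 = 0
  tendsto_atTop : Tendsto (fun u => toFun u / u) atTop atTop
  tendsto_zero : Tendsto (fun u => toFun u / u) (nhdsWithin 0 {(0:ℝ)}ᶜ) (nhds 0)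

/-- The set of admissible constants `k` in the Luxemburg norm of `f`. -/
def orliczSet {d : ℕ} (Q : YoungFunction) (f : (Fin d → ℝ) → ℝ) : Set ℝ :=
  {k | 0 < k ∧ Integrable (fun x => Q.toFun (|f x| / k)) (cubeMeasure d) ∧
    ∫ x, Q.toFun (|f x| / k) ∂(cubeMeasure d) ≤ 1}

/-- `f` belongs to the Orlicz space `L_Q(I^d)`. -/
def MemOrlicz {d : ℕ} (Q : YoungFunction) (f : (Fin d → ℝ) → ℝ) : Prop :=
  Measurable f ∧ (orliczSet Q f).Nonempty

/-- The Luxemburg norm on the Orlicz space `L_Q(I^d)`. -/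
def orliczNorm {d : ℕ} (Q : YoungFunction) (f : (Fin d → ℝ) → ℝ) : ℝ :=
  sInf (orliczSet Q f)

/-- `p_n = 2^{2n} + 2^{2n-2} + ⋯ + 2^0`. -/
def pIdx (n : ℕ) : ℕ := ∑ k ∈ Finset.range (n + 1), 4 ^ k

/-- `m̃ = ⌊ l_{p_{⌊m/2⌋}-1}/16 - 2^15 ⌋`. -/
def mTilde (m : ℕ) : ℤ := ⌊logSum (pIdx (m / 2) - 1) / 16 - 2 ^ 15⌋

/-- `m₀ = min{m : m̃ > 1}`. -/
def m₀ : ℕ := sInf {m : ℕ | 1 < mTilde m}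

/-- The set `Ω_n`. -/
def Omega (n : ℕ) : Set ℝ :=
  ⋃ m ∈ Finset.Icc n (2 * n),
    Set.Ico ((2:ℝ) ^ (-(m:ℤ) - 1) + (2:ℝ) ^ (-(m:ℤ) - mTilde m)) ((2:ℝ) ^ (-(m:ℤ)))

/-- `k`-th binary digit of `x` (the expansion not terminating in `1`'s). -/
def binDigit (k : ℕ) (x : ℝ) : ℕ := (⌊x * 2 ^ (k + 1)⌋).toNat % 2

/-- Dyadic addition on `[0,1)`. -/
def dyadicAdd (x t : ℝ) : ℝ :=
  ∑' k : ℕ, |(binDigit k x : ℝ) - (binDigit k t : ℝ)| / 2 ^ (k + 1)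

/-- Dyadic convolution `f ∗ K` on `[0,1)`. -/
def dyadicConv (f K : ℝ → ℝ) (x : ℝ) : ℝ :=
  ∫ t in Set.Ico (0:ℝ) 1, f t * K (dyadicAdd x t)

/-- Lebesgue measure restricted to `[0,1)`. -/
def unitMeasure : Measure ℝ := volume.restrict (Set.Ico (0:ℝ) 1)

/-- A set `A ⊆ L_Q(I^d)` is nowhere dense w.r.t. the Luxemburg norm. -/
def OrliczNowhereDense {d : ℕ} (Q : YoungFunction) (A : Set ((Fin d → ℝ) → ℝ)) : Prop :=
  ∀ f, MemOrlicz Q f → ∀ ε > 0, ∃ g, MemOrlicz Q g ∧ ∃ δ > 0,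
    (∀ h, MemOrlicz Q h → orliczNorm Q (h - g) < δ → orliczNorm Q (h - f) < ε) ∧
    (∀ h, MemOrlicz Q h → orliczNorm Q (h - g) < δ → h ∉ A)

/-- A set `A ⊆ L_Q(I^d)` is of first Baire category (meager) w.r.t. the Luxemburg norm. -/
def OrliczMeager {d : ℕ} (Q : YoungFunction) (A : Set ((Fin d → ℝ) → ℝ)) : Prop :=
  ∃ F : ℕ → Set ((Fin d → ℝ) → ℝ), (∀ k, OrliczNowhereDense Q (F k)) ∧ A ⊆ ⋃ k, F k

/-!
The test functions are `f = u · 1_{[0, 2^{-N})^d}`. All Walsh functions of index `< 2^N` equal `1`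
on the small cube, so for `n ≤ 2^N` the mixed logarithmic mean of `f` is `u 2^{-Nd}` times the
tensor product of the Nörlund kernels `F_n` (coordinates in `B`) and the Riesz kernels `G_n` (the
others). The latter have integral `1`, hence `‖G_n‖₁ ≥ 1`.

The former have `‖F_n‖₁ ≳ log n` along `n = p_m`. Indeed `p_{m+1} = 4^{m+1} + p_m`, and expanding
`H_n = l_n F_n` along the leading binary digit gives
`H_{p_{m+1}} = l D_{4^{m+1}} ± H_{p_m} + error` with `l = l_{p_{m+1}}`. Abel summation and the
`L¹`-boundedness of the Fejér kernels bound the error in `L¹`. On the support of `D_{4^{m+1}}` the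
first term dominates, so each step increases `‖H_{p_m}‖₁` by at least `l / 3 - O(1)`, and `l ≳ m`.
Thus `‖H_{p_m}‖₁ ≳ m²`, while `l_{p_m}` is of order `m`.

Choosing `N` such that `2^{-Nd}` is about `1 / Q(u)` puts `f` in the unit ball of `L_Q` and makes
the `L¹` norm of the mean at least a constant times `u log^{|B|}(1 + u) / Q(u)`. If this were
bounded for large `u`, then `L_Q` would be contained in `L log^{|B|} L`.
-/

/-! ### Walsh functions -/

lemma abs_r0 (x : ℝ) : |r0 x| = 1 := by
  unfold r0; split_ifs <;> simp

lemma measurable_r0 : Measurable r0 :=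
  Measurable.ite (measurableSet_lt measurable_fract measurable_const)
    measurable_const measurable_const

lemma periodic_r0 : Function.Periodic r0 1 := fun x => by
  simp only [r0, Int.fract_add_one]

lemma antiperiodic_r0 : Function.Antiperiodic r0 (1 / 2) := fun x => by
  have h0 := Int.fract_nonneg x
  have h1 := Int.fract_lt_one x
  have hx := Int.floor_add_fract x
  rcases lt_or_ge (Int.fract x) (1 / 2) with h | h
  · have hshift : Int.fract (x + 1 / 2) = Int.fract x + 1 / 2 :=
      Int.fract_eq_iff.2 ⟨by linarith, by linarith, ⌊x⌋, by linarith⟩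
    rw [r0, r0, hshift, if_pos h, if_neg (by linarith)]
  · have hshift : Int.fract (x + 1 / 2) = Int.fract x - 1 / 2 :=
      Int.fract_eq_iff.2 ⟨by linarith, by linarith, ⌊x⌋ + 1, by push_cast; linarith⟩
    rw [r0, r0, hshift, if_neg h.not_gt, if_pos (by linarith), neg_neg]

lemma r0_eq_one_of_mem_Ico {x : ℝ} (hx : x ∈ Set.Ico (0 : ℝ) (1 / 2)) : r0 x = 1 := by
  rw [r0, Int.fract_eq_self.2 ⟨hx.1, by linarith [hx.2]⟩, if_pos hx.2]

lemma abs_rademacher (n : ℕ) (x : ℝ) : |rademacher n x| = 1 := abs_r0 _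

lemma rademacher_mul_self (n : ℕ) (x : ℝ) : rademacher n x * rademacher n x = 1 := by
  rw [← abs_mul_abs_self, abs_rademacher, one_mul]

lemma measurable_rademacher (n : ℕ) : Measurable (rademacher n) :=
  measurable_r0.comp (measurable_const.mul measurable_id)

lemma periodic_rademacher {j k : ℕ} (hjk : j ≤ k) :
    Function.Periodic (rademacher k) (1 / 2 ^ j) := fun x => by
  have hshift : (2 : ℝ) ^ k * (x + 1 / 2 ^ j) = 2 ^ k * x + ((2 ^ (k - j) : ℕ) : ℝ) * 1 := by
    rw [mul_add, mul_one_div, Nat.cast_pow, Nat.cast_ofNat, mul_one,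
      pow_sub₀ _ two_ne_zero hjk, div_eq_mul_inv]
  rw [rademacher, rademacher, hshift, periodic_r0.nat_mul]

lemma antiperiodic_rademacher (k : ℕ) :
    Function.Antiperiodic (rademacher k) (1 / 2 ^ (k + 1)) := fun x => by
  have hshift : (2 : ℝ) ^ k * (x + 1 / 2 ^ (k + 1)) = 2 ^ k * x + 1 / 2 := by
    rw [pow_succ]; field_simp
  rw [rademacher, rademacher, hshift, antiperiodic_r0]

lemma walsh_eq_prod_range {n K : ℕ} (h : n < 2 ^ K) (x : ℝ) :
    walsh n x = ∏ k ∈ Finset.range K, if n.testBit k then rademacher k x else 1 := by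
  have prod_range_eq : ∀ {K L : ℕ}, K ≤ L → n < 2 ^ K →
      (∏ k ∈ Finset.range K, if n.testBit k then rademacher k x else 1) =
      ∏ k ∈ Finset.range L, if n.testBit k then rademacher k x else 1 := by
    intro K L hKL hK
    refine Finset.prod_subset (Finset.range_mono hKL) fun k _ hk => ?_
    rw [Finset.mem_range, not_lt] at hk
    rw [Nat.testBit_lt_two_pow (hK.trans_le (Nat.pow_le_pow_right two_pos hk)),
      if_neg Bool.false_ne_true]
  have hn : n < 2 ^ (n + 1) := n.lt_succ_self.trans Nat.lt_two_pow_self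
  rcases le_total K (n + 1) with hK | hK
  · exact (prod_range_eq hK h).symm
  · exact prod_range_eq hK hn

lemma walsh_zero (x : ℝ) : walsh 0 x = 1 := by simp [walsh]

lemma abs_walsh (n : ℕ) (x : ℝ) : |walsh n x| = 1 := by
  rw [walsh, Finset.abs_prod]
  refine Finset.prod_eq_one fun k _ => ?_
  split_ifs
  · exact abs_rademacher k x
  · exact abs_one

lemma measurable_walsh (n : ℕ) : Measurable (walsh n) := by
  refine Finset.measurable_prod _ fun k _ => ?_
  split_ifs
  · exact measurable_rademacher k
  · exact measurable_const

lemma periodic_walsh (n : ℕ) : Function.Periodic (walsh n) 1 := fun x => by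
  refine Finset.prod_congr rfl fun k _ => ?_
  have hk : rademacher k (x + 1) = rademacher k x := by
    simpa only [pow_zero, div_one] using periodic_rademacher k.zero_le x
  rw [hk]

-- Shift by half the period of the slowest Rademacher factor of `walsh n`: that factor changes sign
-- and all the faster ones are unchanged.
lemma exists_antiperiodic_walsh {n : ℕ} (hn : n ≠ 0) :
    ∃ c : ℝ, Function.Antiperiodic (walsh n) c := by
  have hbit := Nat.exists_testBit_of_ne_zero hn
  obtain ⟨v, hv, hmin⟩ : ∃ v, n.testBit v ∧ ∀ k < v, ¬n.testBit k :=
    ⟨Nat.find hbit, Nat.find_spec hbit, fun _ => Nat.find_min hbit⟩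
  have hvn : v ∈ Finset.range (n + 1) :=
    Finset.mem_range_succ_iff.2 (Nat.lt_two_pow_self.le.trans (Nat.ge_two_pow_of_testBit hv))
  refine ⟨1 / 2 ^ (v + 1), fun x => ?_⟩
  have factor_shift : ∀ k, (if n.testBit k then rademacher k (x + 1 / 2 ^ (v + 1)) else 1) =
      (if k = v then -1 else 1) * (if n.testBit k then rademacher k x else 1) := by
    intro k
    rcases lt_trichotomy k v with hk | rfl | hk
    · rw [if_neg (hmin k hk), if_neg (hmin k hk), if_neg hk.ne, one_mul]
    · rw [if_pos hv, if_pos hv, if_pos rfl, antiperiodic_rademacher, neg_one_mul]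
    · rw [periodic_rademacher hk x, if_neg hk.ne', one_mul]
  simp only [walsh, factor_shift]
  rw [Finset.prod_mul_distrib, Finset.prod_ite_eq' _ _ fun _ => (-1 : ℝ), if_pos hvn, neg_one_mul]

lemma walsh_two_pow_add {A j : ℕ} (hj : j < 2 ^ A) (x : ℝ) :
    walsh (2 ^ A + j) x = rademacher A x * walsh j x := by
  have hsum : 2 ^ A + j < 2 ^ (A + 1) := by rw [pow_succ]; omega
  rw [walsh_eq_prod_range hsum, walsh_eq_prod_range hj, Finset.prod_range_succ,
    Nat.testBit_two_pow_add_eq, Nat.testBit_lt_two_pow hj, Bool.not_false, if_pos rfl, mul_comm]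
  congr 1
  refine Finset.prod_congr rfl fun k hk => ?_
  rw [Nat.testBit_two_pow_add_gt (Finset.mem_range.1 hk)]

lemma walsh_two_pow_sub_succ {A k : ℕ} (hk : k < 2 ^ A) (x : ℝ) :
    walsh (2 ^ A - (k + 1)) x = walsh (2 ^ A - 1) x * walsh k x := by
  have hA := Nat.two_pow_pos A
  rw [walsh_eq_prod_range (by omega : 2 ^ A - (k + 1) < 2 ^ A),
    walsh_eq_prod_range (by omega : 2 ^ A - 1 < 2 ^ A), walsh_eq_prod_range hk,
    ← Finset.prod_mul_distrib]
  refine Finset.prod_congr rfl fun i hi => ?_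
  have hi' := Finset.mem_range.1 hi
  rw [Nat.testBit_two_pow_sub_succ hk, Nat.testBit_two_pow_sub_one]
  cases k.testBit i <;> simp [hi', rademacher_mul_self]

lemma walsh_eq_one_of_mem_Ico {N j : ℕ} (hj : j < 2 ^ N) {x : ℝ}
    (hx : x ∈ Set.Ico (0 : ℝ) (1 / 2 ^ N)) : walsh j x = 1 := by
  rw [walsh_eq_prod_range hj]
  refine Finset.prod_eq_one fun k hk => ite_eq_right_iff.2 fun _ => ?_
  have hkN : (2 : ℝ) ^ k * 2 ≤ 2 ^ N := by
    rw [← pow_succ]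
    exact pow_le_pow_right₀ one_le_two (Finset.mem_range.1 hk)
  have hxN : x * 2 ^ N < 1 := (lt_div_iff₀ (by positivity)).1 hx.2
  exact r0_eq_one_of_mem_Ico ⟨mul_nonneg (by positivity) hx.1, by nlinarith [hx.1]⟩

/-! ### Dirichlet kernels -/

lemma dirichletKernel_zero (x : ℝ) : dirichletKernel 0 x = 0 := Finset.sum_range_zero _

lemma dirichletKernel_succ (n : ℕ) (x : ℝ) :
    dirichletKernel (n + 1) x = dirichletKernel n x + walsh n x :=
  Finset.sum_range_succ _ _

lemma abs_dirichletKernel_le (n : ℕ) (x : ℝ) : |dirichletKernel n x| ≤ n :=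
  (Finset.abs_sum_le_sum_abs _ _).trans_eq (by simp [abs_walsh])

lemma dirichletKernel_two_pow_add {A j : ℕ} (hj : j ≤ 2 ^ A) (x : ℝ) :
    dirichletKernel (2 ^ A + j) x
      = dirichletKernel (2 ^ A) x + rademacher A x * dirichletKernel j x := by
  simp only [dirichletKernel]
  rw [Finset.sum_range_add, Finset.mul_sum]
  congr 1
  exact Finset.sum_congr rfl fun i hi => walsh_two_pow_add ((Finset.mem_range.1 hi).trans_le hj) x

lemma dirichletKernel_two_pow_sub {A i : ℕ} (hi : i ≤ 2 ^ A) (x : ℝ) :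
    dirichletKernel (2 ^ A - i) x
      = dirichletKernel (2 ^ A) x - walsh (2 ^ A - 1) x * dirichletKernel i x := by
  induction i with
  | zero => simp [dirichletKernel_zero]
  | succ i ih =>
    have hstep := dirichletKernel_succ (2 ^ A - (i + 1)) x
    rw [show 2 ^ A - (i + 1) + 1 = 2 ^ A - i by omega, walsh_two_pow_sub_succ hi,
      ih (by omega)] at hstep
    rw [dirichletKernel_succ]
    linear_combination -hstep

lemma dirichletKernel_two_pow_eq_zero_or (A : ℕ) (x : ℝ) :
    dirichletKernel (2 ^ A) x = 0 ∨ dirichletKernel (2 ^ A) x = 2 ^ A := by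
  induction A with
  | zero => right; simp [dirichletKernel, walsh_zero]
  | succ A ih =>
    rw [pow_succ, mul_two, dirichletKernel_two_pow_add le_rfl]
    rcases ih with h | h
    · left; rw [h, mul_zero, add_zero]
    · rcases eq_or_eq_neg_of_abs_eq (abs_rademacher A x) with hr | hr
      · right; rw [h, hr]; ring
      · left; rw [h, hr]; ring

lemma dirichletKernel_two_pow_nonneg (A : ℕ) (x : ℝ) : 0 ≤ dirichletKernel (2 ^ A) x := by
  rcases dirichletKernel_two_pow_eq_zero_or A x with h | h <;> rw [h]
  positivity

/-- The sum `∑_{i<M} D_i` of Dirichlet kernels, i.e. the Walsh–Fejér kernel without its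
normalising factor. -/
def fejerSum (M : ℕ) (x : ℝ) : ℝ := ∑ i ∈ Finset.range M, dirichletKernel i x

lemma fejerSum_two_pow_add {A j : ℕ} (hj : j ≤ 2 ^ A) (x : ℝ) :
    fejerSum (2 ^ A + j) x
      = fejerSum (2 ^ A) x + j * dirichletKernel (2 ^ A) x + rademacher A x * fejerSum j x := by
  have hblock : ∑ i ∈ Finset.range j, dirichletKernel (2 ^ A + i) x
      = ∑ i ∈ Finset.range j, (dirichletKernel (2 ^ A) x + rademacher A x * dirichletKernel i x) :=
    Finset.sum_congr rfl fun i hi =>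
      dirichletKernel_two_pow_add ((Finset.mem_range.1 hi).le.trans hj) x
  simp only [fejerSum]
  rw [Finset.sum_range_add, hblock, Finset.sum_add_distrib, Finset.sum_const, Finset.card_range,
    nsmul_eq_mul, Finset.mul_sum, add_assoc]

lemma fejerSum_two_pow_nonneg (A : ℕ) (x : ℝ) : 0 ≤ fejerSum (2 ^ A) x := by
  induction A with
  | zero => simp [fejerSum, dirichletKernel_zero]
  | succ A ih =>
    rw [pow_succ, mul_two, fejerSum_two_pow_add le_rfl]
    have hD : 0 ≤ ((2 ^ A : ℕ) : ℝ) * dirichletKernel (2 ^ A) x :=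
      mul_nonneg (Nat.cast_nonneg _) (dirichletKernel_two_pow_nonneg A x)
    have hr := (abs_le.1 (abs_rademacher A x).le).1
    nlinarith

lemma abs_fejerSum_two_pow_add_le {A j : ℕ} (hj : j ≤ 2 ^ A) (x : ℝ) :
    |fejerSum (2 ^ A + j) x|
      ≤ fejerSum (2 ^ A) x + j * dirichletKernel (2 ^ A) x + |fejerSum j x| := by
  rw [fejerSum_two_pow_add hj]
  refine (abs_add_le _ _).trans_eq ?_
  have hD : 0 ≤ (j : ℝ) * dirichletKernel (2 ^ A) x :=
    mul_nonneg (Nat.cast_nonneg _) (dirichletKernel_two_pow_nonneg A x)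
  rw [abs_of_nonneg (add_nonneg (fejerSum_two_pow_nonneg A x) hD), abs_mul, abs_rademacher, one_mul]

/-! ### `L¹` estimates on `[0,1)` -/

instance : IsProbabilityMeasure unitMeasure := ⟨by simp [unitMeasure]⟩

lemma integral_unitMeasure (f : ℝ → ℝ) : ∫ x, f x ∂unitMeasure = ∫ x in (0 : ℝ)..1, f x := by
  rw [intervalIntegral.integral_of_le zero_le_one, unitMeasure, integral_Ico_eq_integral_Ioc]

lemma intervalIntegral_eq_zero_of_periodic_of_antiperiodic {f : ℝ → ℝ} {T c : ℝ}
    (hT : Function.Periodic f T) (hc : Function.Antiperiodic f c) (t : ℝ) :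
    ∫ x in t..t + T, f x = 0 := by
  have hneg : ∫ x in t..t + T, f (x + c) = -∫ x in t..t + T, f x := by
    simp only [hc _, intervalIntegral.integral_neg]
  rw [intervalIntegral.integral_comp_add_right, add_right_comm,
    hT.intervalIntegral_add_eq (t + c) t] at hneg
  linarith

lemma integral_walsh {n : ℕ} (hn : n ≠ 0) : ∫ x, walsh n x ∂unitMeasure = 0 := by
  obtain ⟨c, hc⟩ := exists_antiperiodic_walsh hn
  rw [integral_unitMeasure]
  simpa only [zero_add] using
    intervalIntegral_eq_zero_of_periodic_of_antiperiodic (periodic_walsh n) hc 0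

lemma integrable_walsh (n : ℕ) : Integrable (walsh n) unitMeasure :=
  .of_bound (measurable_walsh n).aestronglyMeasurable 1 (.of_forall fun x => (abs_walsh n x).le)

lemma integrable_dirichletKernel (n : ℕ) : Integrable (dirichletKernel n) unitMeasure :=
  integrable_finsetSum _ fun k _ => integrable_walsh k

lemma integral_dirichletKernel {n : ℕ} (hn : n ≠ 0) :
    ∫ x, dirichletKernel n x ∂unitMeasure = 1 := by
  obtain ⟨m, rfl⟩ := Nat.exists_eq_succ_of_ne_zero hn
  simp only [dirichletKernel]
  rw [integral_finsetSum _ fun k _ => integrable_walsh k, Finset.sum_range_succ',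
    Finset.sum_eq_zero fun k _ => integral_walsh k.succ_ne_zero]
  simp [walsh_zero]

lemma integral_dirichletKernel_le_one (n : ℕ) : ∫ x, dirichletKernel n x ∂unitMeasure ≤ 1 := by
  rcases eq_or_ne n 0 with rfl | hn
  · simp [dirichletKernel_zero]
  · exact (integral_dirichletKernel hn).le

lemma integrable_fejerSum (M : ℕ) : Integrable (fejerSum M) unitMeasure :=
  integrable_finsetSum _ fun k _ => integrable_dirichletKernel k

lemma integral_fejerSum_le (M : ℕ) : ∫ x, fejerSum M x ∂unitMeasure ≤ M := by
  simp only [fejerSum]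
  rw [integral_finsetSum _ fun k _ => integrable_dirichletKernel k]
  exact (Finset.sum_le_sum fun i _ => integral_dirichletKernel_le_one i).trans_eq (by simp)

lemma integral_abs_fejerSum_two_pow_add_le {A j : ℕ} (hj : j ≤ 2 ^ A) :
    ∫ x, |fejerSum (2 ^ A + j) x| ∂unitMeasure ≤ 2 ^ A + j + ∫ x, |fejerSum j x| ∂unitMeasure := by
  have hFD : Integrable (fun x => fejerSum (2 ^ A) x + j * dirichletKernel (2 ^ A) x) unitMeasure :=
    (integrable_fejerSum _).add ((integrable_dirichletKernel _).const_mul _)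
  calc ∫ x, |fejerSum (2 ^ A + j) x| ∂unitMeasure
      ≤ ∫ x, (fejerSum (2 ^ A) x + j * dirichletKernel (2 ^ A) x + |fejerSum j x|) ∂unitMeasure :=
        integral_mono (integrable_fejerSum _).abs (hFD.add (integrable_fejerSum j).abs)
          fun x => abs_fejerSum_two_pow_add_le hj x
    _ = ∫ x, fejerSum (2 ^ A) x ∂unitMeasure + j + ∫ x, |fejerSum j x| ∂unitMeasure := by
        rw [integral_add hFD (integrable_fejerSum j).abs, integral_add (integrable_fejerSum _)
          ((integrable_dirichletKernel _).const_mul _), integral_const_mul,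
          integral_dirichletKernel (Nat.two_pow_pos A).ne', mul_one]
    _ ≤ 2 ^ A + j + ∫ x, |fejerSum j x| ∂unitMeasure := by
        gcongr
        exact_mod_cast integral_fejerSum_le (2 ^ A)

lemma integral_abs_fejerSum_le (M : ℕ) : ∫ x, |fejerSum M x| ∂unitMeasure ≤ 2 * M := by
  induction M using Nat.strong_induction_on with
  | _ M ih =>
  rcases Nat.eq_zero_or_pos M with rfl | hM
  · simp [fejerSum]
  obtain ⟨j, hj⟩ := Nat.exists_eq_add_of_le (Nat.pow_log_le_self 2 hM.ne')
  set A := Nat.log 2 M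
  have hM_lt : M < 2 ^ (A + 1) := Nat.lt_pow_succ_log_self one_lt_two M
  have hA := Nat.two_pow_pos A
  have hjA : j ≤ 2 ^ A := by rw [pow_succ] at hM_lt; omega
  have hM_cast : (M : ℝ) = 2 ^ A + j := by exact_mod_cast hj
  have hstep := integral_abs_fejerSum_two_pow_add_le hjA
  rw [← hj] at hstep
  have hj_cast : (j : ℝ) ≤ 2 ^ A := by exact_mod_cast hjA
  linarith [ih j (by omega)]

-- Abel summation, by induction on `M`: subtracting the last weight `a M` from all the others keeps
-- them nonnegative and antitone.
lemma integral_abs_sum_mul_le_of_antitoneOn {α : Type*} [MeasurableSpace α] {μ : Measure α}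
    {f : ℕ → α → ℝ} (hf : ∀ i, Integrable (f i) μ) {c : ℝ}
    (hc : ∀ M : ℕ, ∫ x, |∑ i ∈ Finset.range M, f i x| ∂μ ≤ c * M) (M : ℕ) {a : ℕ → ℝ}
    (ha_nonneg : ∀ i < M, 0 ≤ a i) (ha : AntitoneOn a (Set.Iio M)) :
    ∫ x, |∑ i ∈ Finset.range M, a i * f i x| ∂μ ≤ c * ∑ i ∈ Finset.range M, a i := by
  induction M generalizing a with
  | zero => simp
  | succ M ih =>
    have haM : 0 ≤ a M := ha_nonneg M M.lt_succ_self
    have hle : ∀ i < M, a M ≤ a i := fun i hi =>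
      ha (hi.trans M.lt_succ_self) (Set.mem_Iio.2 M.lt_succ_self) hi.le
    have hsub := ih (a := fun i => a i - a M) (fun i hi => sub_nonneg.2 (hle i hi))
      fun i hi j hj hij => sub_le_sub_right
        (ha (hi.trans M.lt_succ_self) (Set.mem_Iio.2 (hj.trans M.lt_succ_self)) hij) _
    have hsplit : ∀ x, ∑ i ∈ Finset.range (M + 1), a i * f i x
        = ∑ i ∈ Finset.range M, (a i - a M) * f i x
          + a M * ∑ i ∈ Finset.range (M + 1), f i x := by
      intro x
      simp only [sub_mul, Finset.sum_sub_distrib, Finset.sum_range_succ, Finset.mul_sum, mul_add]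
      ring
    have hint : ∀ (b : ℕ → ℝ) (K : ℕ),
        Integrable (fun x => ∑ i ∈ Finset.range K, b i * f i x) μ := fun b K =>
      integrable_finsetSum _ fun i _ => (hf i).const_mul _
    have hint_sum : Integrable (fun x => a M * |∑ i ∈ Finset.range (M + 1), f i x|) μ :=
      (integrable_finsetSum _ fun i _ => hf i).abs.const_mul _
    calc ∫ x, |∑ i ∈ Finset.range (M + 1), a i * f i x| ∂μ
        ≤ ∫ x, (|∑ i ∈ Finset.range M, (a i - a M) * f i x|
            + a M * |∑ i ∈ Finset.range (M + 1), f i x|) ∂μ := by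
          refine integral_mono (hint a _).abs ((hint _ _).abs.add hint_sum) fun x => ?_
          simp only [hsplit x]
          exact (abs_add_le _ _).trans_eq (by rw [abs_mul, abs_of_nonneg haM])
      _ ≤ c * ∑ i ∈ Finset.range M, (a i - a M) + a M * (c * (M + 1 : ℕ)) := by
          rw [integral_add (hint _ _).abs hint_sum, integral_const_mul]
          exact add_le_add hsub (mul_le_mul_of_nonneg_left (hc _) haM)
      _ = c * ∑ i ∈ Finset.range (M + 1), a i := by
          rw [Finset.sum_sub_distrib, Finset.sum_range_succ, Finset.sum_const, Finset.card_range,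
            nsmul_eq_mul]
          push_cast
          ring

/-! ### Logarithmic sums -/

lemma logSum_eq_sum_Ico (n : ℕ) : logSum n = ∑ k ∈ Finset.Ico 1 n, (1 : ℝ) / k := by
  refine Finset.sum_congr (Finset.ext fun k => ?_) fun _ _ => rfl
  simp only [Finset.mem_Icc, Finset.mem_Ico]
  omega

lemma logSum_eq_harmonic (n : ℕ) : logSum n = (harmonic (n - 1) : ℝ) := by
  rw [logSum, harmonic_eq_sum_Icc]
  push_cast
  simp only [one_div]

lemma logSum_mono : Monotone logSum := fun m n hmn => by
  rw [logSum_eq_sum_Ico, logSum_eq_sum_Ico]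
  exact Finset.sum_le_sum_of_subset_of_nonneg (Finset.Ico_subset_Ico_right hmn)
    fun _ _ _ => by positivity

lemma logSum_nonneg (n : ℕ) : 0 ≤ logSum n := Finset.sum_nonneg fun _ _ => by positivity

lemma log_le_logSum {n : ℕ} (hn : n ≠ 0) : Real.log n ≤ logSum n := by
  obtain ⟨m, rfl⟩ := Nat.exists_eq_succ_of_ne_zero hn
  rw [logSum_eq_harmonic]
  exact log_add_one_le_harmonic m

lemma logSum_pos {n : ℕ} (hn : 2 ≤ n) : 0 < logSum n :=
  (Real.log_pos (by exact_mod_cast hn)).trans_le (log_le_logSum (by omega))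

lemma logSum_le_one_add_log (n : ℕ) : logSum n ≤ 1 + Real.log n := by
  rw [logSum_eq_harmonic]
  refine (harmonic_le_one_add_log _).trans ?_
  rcases Nat.eq_zero_or_pos (n - 1) with h | h
  · rw [h, Nat.cast_zero, Real.log_zero]
    linarith [Real.log_natCast_nonneg n]
  · gcongr
    exact Nat.sub_le n 1

lemma one_le_log_four : 1 ≤ Real.log 4 := by
  rw [show (4 : ℝ) = 2 ^ 2 by norm_num, Real.log_pow]
  push_cast
  linarith [Real.log_two_gt_d9]

lemma log_four_le_two : Real.log 4 ≤ 2 := by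
  rw [show (4 : ℝ) = 2 ^ 2 by norm_num, Real.log_pow]
  push_cast
  linarith [Real.log_two_lt_d9]

lemma two_pow_two_mul {R : Type*} [Semiring R] (k : ℕ) : (2 : R) ^ (2 * k) = 4 ^ k := by
  rw [pow_mul]
  norm_num

lemma pIdx_succ (m : ℕ) : pIdx (m + 1) = 2 ^ (2 * (m + 1)) + pIdx m := by
  rw [pIdx, Finset.sum_range_succ, ← pIdx, two_pow_two_mul, add_comm]

lemma four_pow_le_pIdx (m : ℕ) : 4 ^ m ≤ pIdx m := by
  rw [pIdx, Finset.sum_range_succ]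
  exact Nat.le_add_left _ _

lemma pIdx_ne_zero (m : ℕ) : pIdx m ≠ 0 :=
  ((Nat.pow_pos four_pos).trans_le (four_pow_le_pIdx m)).ne'

lemma two_le_pIdx {m : ℕ} (hm : m ≠ 0) : 2 ≤ pIdx m :=
  calc 2 ≤ 4 := by norm_num
    _ ≤ 4 ^ m := Nat.le_self_pow hm 4
    _ ≤ pIdx m := four_pow_le_pIdx m

lemma three_mul_pIdx_add_one (m : ℕ) : 3 * pIdx m + 1 = 4 ^ (m + 1) := by
  induction m with
  | zero => rfl
  | succ m ih =>
    rw [pIdx_succ, two_pow_two_mul, pow_succ 4 (m + 1)]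
    omega

lemma pIdx_le_four_pow_succ (m : ℕ) : pIdx m ≤ 4 ^ (m + 1) := by
  have := three_mul_pIdx_add_one m
  omega

lemma le_logSum_pIdx (m : ℕ) : (m : ℝ) ≤ logSum (pIdx m) :=
  calc (m : ℝ) ≤ m * Real.log 4 := le_mul_of_one_le_right m.cast_nonneg one_le_log_four
    _ = Real.log (4 ^ m) := (Real.log_pow _ _).symm
    _ ≤ Real.log (pIdx m) :=
        Real.log_le_log (by positivity) (by exact_mod_cast four_pow_le_pIdx m)
    _ ≤ logSum (pIdx m) := log_le_logSum (pIdx_ne_zero m)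

lemma logSum_pIdx_le (m : ℕ) : logSum (pIdx m) ≤ 2 * m + 3 :=
  calc logSum (pIdx m) ≤ 1 + Real.log (pIdx m) := logSum_le_one_add_log _
    _ ≤ 1 + Real.log (4 ^ (m + 1)) := by
        gcongr
        · exact_mod_cast Nat.pos_of_ne_zero (pIdx_ne_zero m)
        · exact_mod_cast pIdx_le_four_pow_succ m
    _ = 1 + (m + 1) * Real.log 4 := by rw [Real.log_pow]; push_cast; rfl
    _ ≤ 1 + (m + 1) * 2 := by gcongr; exact log_four_le_two
    _ = 2 * m + 3 := by ring

/-! ### The logarithmic kernels -/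

/-- The Nörlund logarithmic kernel `F_n` without its normalising factor `1 / l_n`. -/
def norlundSum (n : ℕ) (x : ℝ) : ℝ := ∑ i ∈ Finset.Ico 1 n, dirichletKernel (n - i) x / i

/-- The Riesz-type sum `∑_{s<M} D_s / (n + s)` of Dirichlet kernels with shifted harmonic weights,
the error term when `norlundSum` is expanded along the leading binary digit of its index. -/
def shiftedRieszSum (n M : ℕ) (x : ℝ) : ℝ :=
  ∑ s ∈ Finset.range M, 1 / ((n : ℝ) + s) * dirichletKernel s x

lemma integrable_norlundSum (n : ℕ) : Integrable (norlundSum n) unitMeasure :=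
  integrable_finsetSum _ fun _ _ => (integrable_dirichletKernel _).div_const _

lemma integrable_shiftedRieszSum (n M : ℕ) : Integrable (shiftedRieszSum n M) unitMeasure :=
  integrable_finsetSum _ fun _ _ => (integrable_dirichletKernel _).const_mul _

lemma integral_abs_shiftedRieszSum_le {n : ℕ} (hn : n ≠ 0) (M : ℕ) :
    ∫ x, |shiftedRieszSum n M x| ∂unitMeasure ≤ 2 * (M / n) := by
  have hantitone : Antitone fun s : ℕ => 1 / ((n : ℝ) + s) := fun s t hst => by
    have : (s : ℝ) ≤ t := by exact_mod_cast hst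
    dsimp only
    gcongr
  refine (integral_abs_sum_mul_le_of_antitoneOn integrable_dirichletKernel integral_abs_fejerSum_le
    M (fun s _ => by positivity) (hantitone.antitoneOn _)).trans ?_
  gcongr
  calc ∑ s ∈ Finset.range M, 1 / ((n : ℝ) + s)
      ≤ ∑ _s ∈ Finset.range M, 1 / (n : ℝ) := by
        gcongr
        exact le_add_of_nonneg_right (Nat.cast_nonneg _)
    _ = M / n := by rw [Finset.sum_const, Finset.card_range, nsmul_eq_mul, mul_one_div]

lemma abs_norlundSum_le (n : ℕ) (x : ℝ) : |norlundSum n x| ≤ n * logSum n := by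
  rw [logSum_eq_sum_Ico, Finset.mul_sum]
  refine (Finset.abs_sum_le_sum_abs _ _).trans (Finset.sum_le_sum fun i _ => ?_)
  rw [abs_div, mul_one_div, Nat.abs_cast]
  gcongr
  exact (abs_dirichletKernel_le _ _).trans (by exact_mod_cast Nat.sub_le n i)

lemma norlundSum_two_pow_add {A n : ℕ} (hn : n ≠ 0) (hnA : n ≤ 2 ^ A) (x : ℝ) :
    norlundSum (2 ^ A + n) x = logSum (2 ^ A + n) * dirichletKernel (2 ^ A) x
      - walsh (2 ^ A - 1) x * shiftedRieszSum n (2 ^ A) x + rademacher A x * norlundSum n x := by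
  have sum_split : ∀ f : ℕ → ℝ, ∑ i ∈ Finset.Ico 1 (2 ^ A + n), f i
      = ∑ i ∈ Finset.Ico 1 n, f i + ∑ s ∈ Finset.range (2 ^ A), f (n + s) := fun f => by
    rw [← Finset.sum_Ico_consecutive f (Nat.one_le_iff_ne_zero.2 hn) (Nat.le_add_left n (2 ^ A)),
      Finset.sum_Ico_eq_sum_range f n, Nat.add_sub_cancel]
  have small_indices : ∑ i ∈ Finset.Ico 1 n, dirichletKernel (2 ^ A + n - i) x / (i : ℝ)
      = (∑ i ∈ Finset.Ico 1 n, 1 / (i : ℝ)) * dirichletKernel (2 ^ A) x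
        + rademacher A x * norlundSum n x := by
    rw [norlundSum, Finset.sum_mul, Finset.mul_sum, ← Finset.sum_add_distrib]
    refine Finset.sum_congr rfl fun i hi => ?_
    rw [Nat.add_sub_assoc (Finset.mem_Ico.1 hi).2.le, dirichletKernel_two_pow_add (by omega)]
    ring
  have large_indices :
      ∑ s ∈ Finset.range (2 ^ A), dirichletKernel (2 ^ A + n - (n + s)) x / ((n + s : ℕ) : ℝ)
      = (∑ s ∈ Finset.range (2 ^ A), 1 / ((n + s : ℕ) : ℝ)) * dirichletKernel (2 ^ A) x
        - walsh (2 ^ A - 1) x * shiftedRieszSum n (2 ^ A) x := by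
    rw [shiftedRieszSum, Finset.sum_mul, Finset.mul_sum, ← Finset.sum_sub_distrib]
    refine Finset.sum_congr rfl fun s hs => ?_
    rw [show 2 ^ A + n - (n + s) = 2 ^ A - s by omega,
      dirichletKernel_two_pow_sub (Finset.mem_range.1 hs).le]
    push_cast
    ring
  rw [logSum_eq_sum_Ico, norlundSum, sum_split, sum_split, small_indices, large_indices]
  ring

-- Where `D_{2^A}` vanishes this is the triangle inequality; elsewhere `D_{2^A} = 2^A ≥ 3n`, and the
-- main term `l · 2^A` exceeds `|norlundSum n| ≤ n · l` at least threefold.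
lemma le_abs_norlundSum_two_pow_add {A n : ℕ} (hn : n ≠ 0) (hnA : 3 * n ≤ 2 ^ A) (x : ℝ) :
    |norlundSum n x| + logSum (2 ^ A + n) / 3 * dirichletKernel (2 ^ A) x
      - |shiftedRieszSum n (2 ^ A) x| ≤ |norlundSum (2 ^ A + n) x| := by
  rw [norlundSum_two_pow_add hn (by omega)]
  set l := logSum (2 ^ A + n)
  set error := walsh (2 ^ A - 1) x * shiftedRieszSum n (2 ^ A) x with herror
  set previous := rademacher A x * norlundSum n x with hprevious
  have abs_error : |error| = |shiftedRieszSum n (2 ^ A) x| := by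
    rw [herror, abs_mul, abs_walsh, one_mul]
  have abs_previous : |previous| = |norlundSum n x| := by
    rw [hprevious, abs_mul, abs_rademacher, one_mul]
  rw [← abs_error, ← abs_previous]
  rcases dirichletKernel_two_pow_eq_zero_or A x with h | h
  · rw [h, mul_zero, mul_zero, add_zero, zero_sub, neg_add_eq_sub]
    exact abs_sub_abs_le_abs_sub previous error
  · have hprev_le : |previous| ≤ n * l := abs_previous.trans_le <|
      (abs_norlundSum_le n x).trans <|
        mul_le_mul_of_nonneg_left (logSum_mono (Nat.le_add_left n (2 ^ A))) n.cast_nonneg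
    have hmain : 3 * (n * l) ≤ 2 ^ A * l := by
      rw [← mul_assoc]
      exact mul_le_mul_of_nonneg_right (by exact_mod_cast hnA) (logSum_nonneg _)
    rw [h]
    linarith [le_abs_self (l * 2 ^ A - error + previous), le_abs_self error, neg_abs_le previous]

lemma integral_abs_norlundSum_two_pow_add_ge {A n : ℕ} (hn : n ≠ 0) (hnA : 3 * n ≤ 2 ^ A)
    (hAn : 2 ^ A ≤ 4 * n) :
    ∫ x, |norlundSum n x| ∂unitMeasure + logSum (2 ^ A + n) / 3 - 8
      ≤ ∫ x, |norlundSum (2 ^ A + n) x| ∂unitMeasure := by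
  have hn_pos : (0 : ℝ) < n := by positivity
  have herror : ∫ x, |shiftedRieszSum n (2 ^ A) x| ∂unitMeasure ≤ 8 := by
    have hratio : ((2 ^ A : ℕ) : ℝ) / n ≤ 4 := by
      rw [div_le_iff₀ hn_pos]
      exact_mod_cast hAn
    linarith [integral_abs_shiftedRieszSum_le hn (2 ^ A)]
  have hD := (integrable_dirichletKernel (2 ^ A)).const_mul (logSum (2 ^ A + n) / 3)
  have hHD : Integrable (fun x => |norlundSum n x|
      + logSum (2 ^ A + n) / 3 * dirichletKernel (2 ^ A) x) unitMeasure :=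
    (integrable_norlundSum n).abs.add hD
  have hmono := integral_mono (hHD.sub (integrable_shiftedRieszSum n (2 ^ A)).abs)
    (integrable_norlundSum (2 ^ A + n)).abs (le_abs_norlundSum_two_pow_add hn hnA)
  simp only [Pi.sub_apply] at hmono
  rw [integral_sub hHD (integrable_shiftedRieszSum n (2 ^ A)).abs,
    integral_add (integrable_norlundSum n).abs hD, integral_const_mul,
    integral_dirichletKernel (Nat.two_pow_pos A).ne', mul_one] at hmono
  linarith

lemma integral_abs_norlundSum_pIdx_ge (m : ℕ) :
    (m : ℝ) ^ 2 / 6 - 8 * m ≤ ∫ x, |norlundSum (pIdx m) x| ∂unitMeasure := by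
  induction m with
  | zero => simpa using integral_nonneg fun x => abs_nonneg (norlundSum (pIdx 0) x)
  | succ m ih =>
    have hp := three_mul_pIdx_add_one m
    have hp_ne := pIdx_ne_zero m
    have hpow := two_pow_two_mul (R := ℕ) (m + 1)
    have hstep := integral_abs_norlundSum_two_pow_add_ge (A := 2 * (m + 1)) hp_ne
      (by omega) (by omega)
    rw [← pIdx_succ] at hstep
    have hl := le_logSum_pIdx (m + 1)
    push_cast at hl ⊢
    linarith [(Nat.cast_nonneg m : (0 : ℝ) ≤ m)]

lemma integral_abs_FKernel (n : ℕ) :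
    ∫ x, |FKernel n x| ∂unitMeasure = (∫ x, |norlundSum n x| ∂unitMeasure) / logSum n := by
  have abs_FKernel : ∀ x, |FKernel n x| = 1 / logSum n * |norlundSum n x| := fun x => by
    rw [FKernel, ← norlundSum, abs_mul, abs_of_nonneg (one_div_nonneg.2 (logSum_nonneg n))]
  simp only [abs_FKernel]
  rw [integral_const_mul, one_div_mul_eq_div]

lemma integral_abs_FKernel_pIdx_ge (m : ℕ) :
    (m : ℝ) / 12 - 5 ≤ ∫ x, |FKernel (pIdx m) x| ∂unitMeasure := by
  rcases le_total ((m : ℝ) / 12 - 5) 0 with hm | hm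
  · exact hm.trans (integral_nonneg fun x => abs_nonneg _)
  have hl : 0 < logSum (pIdx m) := (by linarith : (0 : ℝ) < m).trans_le (le_logSum_pIdx m)
  rw [integral_abs_FKernel, le_div_iff₀ hl]
  calc ((m : ℝ) / 12 - 5) * logSum (pIdx m)
      ≤ (m / 12 - 5) * (2 * m + 3) := mul_le_mul_of_nonneg_left (logSum_pIdx_le m) hm
    _ ≤ (m : ℝ) ^ 2 / 6 - 8 * m := by linarith
    _ ≤ ∫ x, |norlundSum (pIdx m) x| ∂unitMeasure := integral_abs_norlundSum_pIdx_ge m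

lemma integral_GKernel {n : ℕ} (hn : 2 ≤ n) : ∫ x, GKernel n x ∂unitMeasure = 1 := by
  have hsum : ∑ i ∈ Finset.Ico 1 n, ∫ x, dirichletKernel i x / (i : ℝ) ∂unitMeasure
      = logSum n := by
    rw [logSum_eq_sum_Ico]
    refine Finset.sum_congr rfl fun i hi => ?_
    rw [integral_div,
      integral_dirichletKernel (Nat.one_le_iff_ne_zero.1 (Finset.mem_Ico.1 hi).1)]
  simp only [GKernel]
  rw [integral_const_mul,
    integral_finsetSum _ fun i _ => (integrable_dirichletKernel i).div_const _, hsum,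
    one_div_mul_cancel (logSum_pos hn).ne']

lemma one_le_integral_abs_GKernel {n : ℕ} (hn : 2 ≤ n) :
    1 ≤ ∫ x, |GKernel n x| ∂unitMeasure := by
  rw [← integral_GKernel hn]
  exact (le_abs_self _).trans abs_integral_le_integral_abs

/-! ### Logarithmic means of multiples of indicators of dyadic cubes -/

lemma cubeMeasure_eq_pi (d : ℕ) : cubeMeasure d = Measure.pi fun _ => unitMeasure := by
  rw [cubeMeasure, unitCube, volume_pi, Measure.restrict_pi_pi]
  rfl

instance (d : ℕ) : IsProbabilityMeasure (cubeMeasure d) := by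
  rw [cubeMeasure_eq_pi]
  infer_instance

/-- The dyadic cube `[0, 2^{-N})^d`, on which all Walsh functions of index `< 2^N` are `1`. -/
def dyadicCube (d N : ℕ) : Set (Fin d → ℝ) := Set.univ.pi fun _ => Set.Ico (0 : ℝ) (1 / 2 ^ N)

lemma measurableSet_dyadicCube (d N : ℕ) : MeasurableSet (dyadicCube d N) :=
  MeasurableSet.univ_pi fun _ => measurableSet_Ico

lemma cubeMeasure_real_dyadicCube (d N : ℕ) :
    (cubeMeasure d).real (dyadicCube d N) = (1 / 2 ^ N) ^ d := by
  have hside : unitMeasure (Set.Ico (0 : ℝ) (1 / 2 ^ N)) = ENNReal.ofReal (1 / 2 ^ N) := by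
    have hsub : Set.Ico (0 : ℝ) (1 / 2 ^ N) ⊆ Set.Ico 0 1 :=
      Set.Ico_subset_Ico_right (div_le_one_of_le₀ (one_le_pow₀ one_le_two) (by positivity))
    rw [unitMeasure, Measure.restrict_apply measurableSet_Ico, Set.inter_eq_left.2 hsub,
      Real.volume_Ico, sub_zero]
  rw [cubeMeasure_eq_pi, dyadicCube, Measure.real, Measure.pi_pi]
  simp only [hside, Finset.prod_const, Finset.card_univ, Fintype.card_fin]
  rw [ENNReal.toReal_pow, ENNReal.toReal_ofReal (by positivity)]

/-- The test function `u · 1_{[0, 2^{-N})^d}` for lower bounds of operator norms. -/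
def cubeBump (d N : ℕ) (u : ℝ) : (Fin d → ℝ) → ℝ := (dyadicCube d N).indicator fun _ => u

section CubeBump

variable {d N : ℕ}

lemma walshCoef_cubeBump (u : ℝ) {j : Fin d → ℕ} (hj : ∀ i, j i < 2 ^ N) :
    walshCoef (cubeBump d N u) j = u * (1 / 2 ^ N) ^ d := by
  have hwalsh : ∀ x, cubeBump d N u x * ∏ i, walsh (j i) (x i) = cubeBump d N u x := fun x => by
    by_cases hx : x ∈ dyadicCube d N
    · rw [Finset.prod_eq_one fun i _ => walsh_eq_one_of_mem_Ico (hj i) (hx i (Set.mem_univ i)),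
        mul_one]
    · rw [cubeBump, Set.indicator_of_notMem hx, zero_mul]
  simp only [walshCoef, hwalsh]
  rw [cubeBump, integral_indicator_const u (measurableSet_dyadicCube d N),
    cubeMeasure_real_dyadicCube, smul_eq_mul, mul_comm]

lemma rectPartialSum_cubeBump (u : ℝ) {K : Fin d → ℕ} (hK : ∀ i, K i ≤ 2 ^ N) (x : Fin d → ℝ) :
    rectPartialSum (cubeBump d N u) K x
      = u * (1 / 2 ^ N) ^ d * ∏ i, dirichletKernel (K i) (x i) := by
  simp only [rectPartialSum, dirichletKernel]
  rw [Finset.prod_univ_sum, Finset.mul_sum]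
  refine Finset.sum_congr rfl fun j hj => ?_
  have hj_lt : ∀ i, j i < 2 ^ N := fun i =>
    (Finset.mem_range.1 (Fintype.mem_piFinset.1 hj i)).trans_le (hK i)
  rw [walshCoef_cubeBump u hj_lt]

lemma mixedLogMean_cubeBump (B : Finset (Fin d)) (u : ℝ) {n : Fin d → ℕ} (hn : ∀ i, n i ≤ 2 ^ N)
    (x : Fin d → ℝ) :
    mixedLogMean B (cubeBump d N u) n x = u * (1 / 2 ^ N) ^ d *
      ∏ i, if i ∈ B then FKernel (n i) (x i) else GKernel (n i) (x i) := by
  have hkernel : ∀ j, (if j ∈ B then FKernel (n j) (x j) else GKernel (n j) (x j))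
      = (logSum (n j))⁻¹ * ∑ i ∈ Finset.Ico 1 (n j),
          dirichletKernel (if j ∈ B then n j - i else i) (x j) / i := fun j => by
    split_ifs <;> simp only [FKernel, GKernel, one_div]
  simp only [hkernel, mixedLogMean]
  rw [Finset.prod_mul_distrib, Finset.prod_univ_sum, ← Finset.prod_inv_distrib, mul_left_comm]
  congr 1
  rw [Finset.mul_sum]
  refine Finset.sum_congr rfl fun i hi => ?_
  have hK : ∀ j, (if j ∈ B then n j - i j else i j) ≤ 2 ^ N := fun j => by
    have := Finset.mem_Ico.1 (Fintype.mem_piFinset.1 hi j)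
    have := hn j
    split_ifs <;> omega
  rw [rectPartialSum_cubeBump u hK, Finset.prod_div_distrib, mul_div_assoc]

lemma le_integral_abs_mixedLogMean_cubeBump (B : Finset (Fin d)) (u : ℝ) {n : Fin d → ℕ}
    (hn : ∀ i, n i ≤ 2 ^ N) (hn_two : ∀ i, 2 ≤ n i) :
    |u| * (1 / 2 ^ N) ^ d * ∏ i ∈ B, ∫ t, |FKernel (n i) t| ∂unitMeasure
      ≤ ∫ x, |mixedLogMean B (cubeBump d N u) n x| ∂cubeMeasure d := by
  have hfactor : ∀ i, (if i ∈ B then ∫ t, |FKernel (n i) t| ∂unitMeasure else 1)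
      ≤ ∫ t, |if i ∈ B then FKernel (n i) t else GKernel (n i) t| ∂unitMeasure := fun i => by
    split_ifs
    · exact le_rfl
    · exact one_le_integral_abs_GKernel (hn_two i)
  simp only [mixedLogMean_cubeBump B u hn, abs_mul, Finset.abs_prod]
  rw [integral_const_mul, abs_of_nonneg (by positivity : (0 : ℝ) ≤ (1 / 2 ^ N) ^ d),
    cubeMeasure_eq_pi, integral_fintype_prod_eq_prod (𝕜 := ℝ)
      fun i t => |if i ∈ B then FKernel (n i) t else GKernel (n i) t|]
  refine mul_le_mul_of_nonneg_left ?_ (by positivity)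
  calc ∏ i ∈ B, ∫ t, |FKernel (n i) t| ∂unitMeasure
      = ∏ i, if i ∈ B then ∫ t, |FKernel (n i) t| ∂unitMeasure else 1 := by
        rw [Finset.prod_ite_mem, Finset.univ_inter]
    _ ≤ _ := Finset.prod_le_prod (fun i _ => by split_ifs <;> positivity) fun i _ => hfactor i

end CubeBump

/-! ### Orlicz spaces -/

lemma YoungFunction.toFun_abs (Q : YoungFunction) (u : ℝ) : Q.toFun |u| = Q.toFun u := by
  rcases abs_choice u with h | h <;> rw [h]
  exact Q.even u

lemma YoungFunction.eventually_one_add_le (Q : YoungFunction) :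
    ∀ᶠ u in atTop, 1 + u ≤ Q.toFun u := by
  filter_upwards [Q.tendsto_atTop.eventually_ge_atTop 2, eventually_ge_atTop 1] with u hu hu_one
  rw [le_div_iff₀ (by linarith)] at hu
  linarith

lemma one_mem_orliczSet_indicator_const (Q : YoungFunction) {d : ℕ} {s : Set (Fin d → ℝ)}
    (hs : MeasurableSet s) {u : ℝ} (hu : (cubeMeasure d).real s * Q.toFun u ≤ 1) :
    1 ∈ orliczSet Q (s.indicator fun _ => u) := by
  have hcomp : (fun x => Q.toFun (|s.indicator (fun _ => u) x| / 1))
      = s.indicator fun _ => Q.toFun u := by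
    funext x
    by_cases hx : x ∈ s
    · simp only [hx, Set.indicator_of_mem, div_one, Q.toFun_abs]
    · simp only [hx, not_false_eq_true, Set.indicator_of_notMem, abs_zero, zero_div, Q.map_zero]
  rw [orliczSet, Set.mem_ofPred_eq, hcomp, integral_indicator_const _ hs]
  exact ⟨one_pos, (integrable_const _).indicator hs, hu⟩

lemma orliczNorm_le {d : ℕ} {Q : YoungFunction} {f : (Fin d → ℝ) → ℝ} {k : ℝ}
    (hk : k ∈ orliczSet Q f) : orliczNorm Q f ≤ k :=
  csInf_le ⟨0, fun _ h => h.1.le⟩ hk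

lemma log_one_add_mul_le {k v : ℝ} (hk : 0 ≤ k) (hkv : k ≤ v) :
    Real.log (1 + k * v) ≤ 2 * Real.log (1 + v) := by
  have hv : 0 ≤ v := hk.trans hkv
  calc Real.log (1 + k * v) ≤ Real.log ((1 + v) ^ 2) :=
        Real.log_le_log (by positivity) (by nlinarith)
    _ = 2 * Real.log (1 + v) := by rw [Real.log_pow, Nat.cast_ofNat]

lemma exists_mul_log_pow_le {b : ℕ} {Φ : ℝ → ℝ} {k : ℝ} (hk : 0 < k)
    (hΦ : ∀ᶠ u in atTop, u * Real.log (1 + u) ^ b ≤ Φ u) :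
    ∃ K, ∀ t, 0 ≤ t → t * Real.log (1 + t) ^ b ≤ K + k * 2 ^ b * |Φ (t / k)| := by
  obtain ⟨V, hV⟩ := (hΦ.and (eventually_ge_atTop k)).exists_forall_of_atTop
  have hV_nonneg : 0 ≤ V := hk.le.trans (hV V le_rfl).2
  have hlog_nonneg : ∀ {t : ℝ}, 0 ≤ t → 0 ≤ Real.log (1 + t) :=
    fun ht => Real.log_nonneg (by linarith)
  refine ⟨k * V * Real.log (1 + k * V) ^ b, fun t ht => ?_⟩
  have hlog := hlog_nonneg ht
  have hlogV := hlog_nonneg (mul_nonneg hk.le hV_nonneg)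
  rcases le_total t (k * V) with htV | hVt
  · calc t * Real.log (1 + t) ^ b ≤ k * V * Real.log (1 + k * V) ^ b := by gcongr
      _ ≤ _ := le_add_of_nonneg_right (by positivity)
  · obtain ⟨v, rfl⟩ : ∃ v, t = k * v := ⟨t / k, (mul_div_cancel₀ t hk.ne').symm⟩
    obtain ⟨hv, hkv⟩ := hV v (le_of_mul_le_mul_left hVt hk)
    rw [mul_div_cancel_left₀ v hk.ne']
    calc k * v * Real.log (1 + k * v) ^ b
        ≤ k * v * (2 * Real.log (1 + v)) ^ b := by
          gcongr
          exact log_one_add_mul_le hk.le hkv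
      _ = k * 2 ^ b * (v * Real.log (1 + v) ^ b) := by ring
      _ ≤ k * 2 ^ b * |Φ v| := by
          gcongr
          exact hv.trans (le_abs_self _)
      _ ≤ _ := le_add_of_nonneg_left (by positivity)

lemma integrable_abs_mul_log_pow_of_eventually_le {α : Type*} [MeasurableSpace α] {μ : Measure α}
    [IsFiniteMeasure μ] {g : α → ℝ} (hg : AEMeasurable g μ) {b : ℕ} {Φ : ℝ → ℝ} {k : ℝ}
    (hk : 0 < k) (hΦ : ∀ᶠ u in atTop, u * Real.log (1 + u) ^ b ≤ Φ u)
    (hint : Integrable (fun x => Φ (|g x| / k)) μ) :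
    Integrable (fun x => |g x| * Real.log (1 + |g x|) ^ b) μ := by
  obtain ⟨K, hK⟩ := exists_mul_log_pow_le hk hΦ
  refine ((integrable_const K).add (hint.abs.const_mul (k * 2 ^ b))).mono'
    (by fun_prop) (Eventually.of_forall fun x => ?_)
  have hlog : 0 ≤ Real.log (1 + |g x|) := Real.log_nonneg (by linarith [abs_nonneg (g x)])
  rw [Real.norm_of_nonneg (by positivity)]
  exact hK _ (abs_nonneg _)

lemma frequently_mul_lt_mul_log_pow {d b : ℕ} {Q : YoungFunction} {g : (Fin d → ℝ) → ℝ}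
    (hg : MemOrlicz Q g)
    (hg_not : ¬ Integrable (fun x => |g x| * Real.log (1 + |g x|) ^ b) (cubeMeasure d)) (C : ℝ) :
    ∃ᶠ u in atTop, C * Q.toFun u < u * Real.log (1 + u) ^ b := by
  obtain ⟨hg_meas, k, hk, hint, -⟩ := hg
  refine fun hle => hg_not ?_
  exact integrable_abs_mul_log_pow_of_eventually_le (Φ := fun u => C * Q.toFun u)
    hg_meas.aemeasurable hk (hle.mono fun u hu => not_lt.1 hu) (hint.const_mul C)

/-! ### Lower bounds for the operator norms -/

lemma log_div_le_of_le_four_pow {d m : ℕ} (hd : d ≠ 0) {q : ℝ} (hq : 0 < q)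
    (hqm : q ≤ (4 ^ d) ^ (m + 1)) : Real.log q / d ≤ 2 * (m + 1) := by
  have hd_pos : (0 : ℝ) < d := by positivity
  rw [div_le_iff₀ hd_pos]
  calc Real.log q ≤ Real.log ((4 ^ d) ^ (m + 1)) := Real.log_le_log hq hqm
    _ = (m + 1) * (d * Real.log 4) := by rw [Real.log_pow, Real.log_pow]; push_cast; rfl
    _ ≤ (m + 1) * (d * 2) := by gcongr; exact log_four_le_two
    _ = 2 * (m + 1) * d := by ring

-- The side `2^{-N} = 4^{-(m+1)}` of the cube is chosen so that its volume is `1 / q` up to the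
-- factor `4^d`. Then `w := log(1 + u) / d ≤ 2(m + 1)`, and `w ≥ 244` is what makes the lower bound
-- `m / 12 - 5` for `‖F_{p_m}‖₁` at least `w / 48`.
lemma exists_le_integral_abs_mixedLogMean_cubeBump {d : ℕ} (hd : d ≠ 0) (B : Finset (Fin d))
    {u q : ℝ} (hu : 0 ≤ u) (huq : 1 + u ≤ q) (hlog : 244 ≤ Real.log (1 + u) / d) :
    ∃ n N : ℕ, 2 ≤ n ∧ (1 / 2 ^ N) ^ d * q ≤ 1 ∧
      1 / (4 ^ d * (48 * d) ^ B.card) * (u * Real.log (1 + u) ^ B.card / q)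
        ≤ ∫ x, |mixedLogMean B (cubeBump d N u) (fun _ => n) x| ∂cubeMeasure d := by
  have hq : 0 < q := by linarith
  obtain ⟨m, hmq, hqm⟩ := exists_nat_pow_near (by linarith : 1 ≤ q)
    (one_lt_pow₀ (by norm_num : (1 : ℝ) < 4) hd)
  have hvolume : ((1 : ℝ) / 2 ^ (2 * (m + 1))) ^ d = 1 / (4 ^ d) ^ (m + 1) := by
    rw [two_pow_two_mul, div_pow, one_pow, pow_right_comm]
  have hm : Real.log (1 + u) / d ≤ 2 * (m + 1) :=
    log_div_le_of_le_four_pow hd (by linarith) (huq.trans hqm.le)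
  have hm_ne : m ≠ 0 := by
    rintro rfl
    norm_num at hm
    linarith
  have hn_le : pIdx m ≤ 2 ^ (2 * (m + 1)) :=
    (pIdx_le_four_pow_succ m).trans_eq (two_pow_two_mul _).symm
  refine ⟨pIdx m, 2 * (m + 1), two_le_pIdx hm_ne, ?_, ?_⟩
  · rw [hvolume, one_div_mul_eq_div]
    exact div_le_one_of_le₀ hqm.le (by positivity)
  refine le_trans ?_ <| le_integral_abs_mixedLogMean_cubeBump B u (fun _ => hn_le) fun _ =>
    two_le_pIdx hm_ne
  rw [Finset.prod_const, abs_of_nonneg hu, hvolume]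
  calc 1 / (4 ^ d * (48 * d) ^ B.card) * (u * Real.log (1 + u) ^ B.card / q)
      = u * (1 / (q * 4 ^ d)) * (Real.log (1 + u) / d / 48) ^ B.card := by
        rw [div_div, div_pow, mul_comm (d : ℝ) 48]
        field_simp
    _ ≤ u * (1 / (4 ^ d) ^ (m + 1)) * (∫ t, |FKernel (pIdx m) t| ∂unitMeasure) ^ B.card := by
        gcongr
        · rw [pow_succ]
          gcongr
        · linarith [integral_abs_FKernel_pIdx_ge m]

lemma exists_eventually_le_integral_abs_mixedLogMean {d : ℕ} (hd : d ≠ 0) (B : Finset (Fin d))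
    (Q : YoungFunction) :
    ∃ c > 0, ∀ᶠ u in atTop, ∃ n : ℕ, 2 ≤ n ∧ ∃ f : (Fin d → ℝ) → ℝ,
      MemOrlicz Q f ∧ orliczNorm Q f ≤ 1 ∧
      c * (u * Real.log (1 + u) ^ B.card / Q.toFun u)
        ≤ ∫ x, |mixedLogMean B f (fun _ => n) x| ∂cubeMeasure d := by
  have hd_pos : (0 : ℝ) < d := by positivity
  have hlog : Tendsto (fun u => Real.log (1 + u) / d) atTop atTop :=
    (Real.tendsto_log_atTop.comp (tendsto_atTop_add_const_left _ 1 tendsto_id)).atTop_div_const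
      hd_pos
  refine ⟨1 / (4 ^ d * (48 * d) ^ B.card), by positivity, ?_⟩
  filter_upwards [Q.eventually_one_add_le, hlog.eventually_ge_atTop 244,
    eventually_ge_atTop 0] with u huQ hu_log hu
  obtain ⟨n, N, hn, hvolume, hle⟩ :=
    exists_le_integral_abs_mixedLogMean_cubeBump hd B hu huQ hu_log
  have hmem : 1 ∈ orliczSet Q (cubeBump d N u) :=
    one_mem_orliczSet_indicator_const Q (measurableSet_dyadicCube d N)
      (by rwa [cubeMeasure_real_dyadicCube])
  exact ⟨n, hn, cubeBump d N u,
    ⟨measurable_const.indicator (measurableSet_dyadicCube d N), 1, hmem⟩, orliczNorm_le hmem, hle⟩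

/-- Theorem (normdiv, part a). If `L_Q(I^d) ⊄ L log^{|B|} L(I^d)` then the
operator norms of `L_{n(B)} ∘ R_{n(B')}` from `L_Q(I^d)` to `L^1(I^d)` are unbounded. -/
theorem stmt2 (d : ℕ) (hd : 1 ≤ d) (B : Finset (Fin d)) (hB : B.Nonempty)
    (Q : YoungFunction)
    (hQ : ∃ g : (Fin d → ℝ) → ℝ, MemOrlicz Q g ∧
      ¬ Integrable (fun x => |g x| * Real.log (1 + |g x|) ^ B.card) (cubeMeasure d)) :
    ∀ C : ℝ, ∃ n : ℕ, 2 ≤ n ∧ ∃ f : (Fin d → ℝ) → ℝ, MemOrlicz Q f ∧ orliczNorm Q f ≤ 1 ∧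
      C < ∫ x, |mixedLogMean B f (fun _ => n) x| ∂(cubeMeasure d) := by
  intro C
  obtain ⟨g, hg, hg_not⟩ := hQ
  obtain ⟨c, hc, hlower⟩ :=
    exists_eventually_le_integral_abs_mixedLogMean (Nat.one_le_iff_ne_zero.1 hd) B Q
  have hQ_pos : ∀ᶠ u in atTop, 0 < Q.toFun u := by
    filter_upwards [Q.eventually_one_add_le, eventually_ge_atTop 0] with u hu hu_nonneg
    linarith
  obtain ⟨u, hCu, ⟨n, hn, f, hf, hf_norm, hle⟩, hQu⟩ :=
    ((frequently_mul_lt_mul_log_pow hg hg_not (C / c)).and_eventually (hlower.and hQ_pos)).exists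
  refine ⟨n, hn, f, hf, hf_norm, lt_of_lt_of_le ?_ hle⟩
  rwa [← lt_div_iff₀ hQu, div_lt_iff₀' hc] at hCu

end
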